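/- arXiv:2008.03271 — 2 statements merged into one kernel-verified Lean document; each statement's English description precedes it below -/
import Mathlib

section
/- The Kullback–Leibler divergence D(f_Normal(·|log y, y⁻¹) ‖ f_logGamma(·|y,1)) between the Gaussian density with mean log y and variance 1/y and the log-Gamma density with parameters y and 1 tends to 0 as y → ∞. -/
open Real MeasureTheory Filter

/-- Gaussian density with mean `m` and variance `v`. -/
noncomputable def fNormal (m v ξ : ℝ) : ℝ :=
  (Real.sqrt (2 * Real.pi * v))⁻¹ * Real.exp (-(ξ - m) ^ 2 / (2 * v))

/-- log-Gamma density with parameters `r` and `s`. -/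
noncomputable def fLogGamma (r s ξ : ℝ) : ℝ :=
  (Real.Gamma r * s ^ r)⁻¹ * Real.exp (r * ξ - Real.exp ξ / s)

/-- Kullback–Leibler divergence between densities `f` and `g` on `ℝ`. -/
noncomputable def KL (f g : ℝ → ℝ) : ℝ :=
  ∫ ξ : ℝ, f ξ * Real.log (f ξ / g ξ)

/-- The error term in the Stirling formula for `log Γ`. -/
noncomputable def stirErr (y : ℝ) : ℝ :=
  log (Gamma y) - ((y - 1 / 2) * log y - y + log (2 * π) / 2)

lemma stirErr_nat : Tendsto (fun n : ℕ => stirErr n) atTop (nhds 0) := by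
  have h := (Stirling.tendsto_stirlingSeq_sqrt_pi.log (by positivity)).sub_const (log √π)
  rw [sub_self] at h
  refine h.congr' ?_
  filter_upwards [eventually_ge_atTop 1] with n hn
  have hn0 : (0 : ℝ) < n := by exact_mod_cast hn
  have hG : Gamma ((n : ℝ) + 1) = n * Gamma n := Gamma_add_one hn0.ne'
  rw [Gamma_nat_eq_factorial] at hG
  rw [Stirling.log_stirlingSeq_formula, hG, log_mul hn0.ne' (Gamma_pos_of_pos hn0).ne',
    log_mul (by norm_num) hn0.ne', log_div hn0.ne' (exp_pos 1).ne', log_exp,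
    log_sqrt pi_pos.le, stirErr, log_mul (by norm_num) pi_pos.ne']
  ring

lemma feq {y : ℝ} (hy : 0 < y) : (log ∘ Gamma) (y + 1) = (log ∘ Gamma) y + log y := by
  simp only [Function.comp]
  rw [Gamma_add_one hy.ne', log_mul hy.ne' (Gamma_pos_of_pos hy).ne', add_comm]

lemma stirErr_diff (n : ℕ) (hn : 2 ≤ n) (x : ℝ) (hx : 0 < x) (hx1 : x ≤ 1) :
    |stirErr (n + x) - stirErr n| ≤ 2 / ((n : ℝ) - 1) := by
  have hU := BohrMollerup.f_add_nat_le convexOn_log_Gamma (fun {y} => @feq y)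
    (show n ≠ 0 by lia) hx hx1
  have hL := BohrMollerup.f_add_nat_ge convexOn_log_Gamma (fun {y} => @feq y) hn hx
  simp only [Function.comp] at hU hL
  have hn2 : (2 : ℝ) ≤ n := by exact_mod_cast hn
  have hn0 : (0 : ℝ) < n := by linarith
  have hm0 : (0 : ℝ) < (n : ℝ) - 1 := by linarith
  have hnx : (0 : ℝ) < n + x := by linarith
  have l1 : x / (n + x) ≤ log (n + x) - log n := by
    have := one_sub_inv_le_log_of_pos (div_pos hnx hn0)
    rw [log_div hnx.ne' hn0.ne'] at this
    refine le_trans (le_of_eq ?_) this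
    field_simp
    ring
  have l2 : log (n + x) - log n ≤ x / n := by
    have := log_le_sub_one_of_pos (div_pos hnx hn0)
    rw [log_div hnx.ne' hn0.ne'] at this
    refine this.trans (le_of_eq ?_)
    field_simp
    ring
  have l3 : log n - log (n - 1) ≤ 1 / (n - 1) := by
    have := log_le_sub_one_of_pos (div_pos hn0 hm0)
    rw [log_div hn0.ne' hm0.ne'] at this
    refine this.trans (le_of_eq ?_)
    field_simp
    ring
  have hk : 0 < (n : ℝ) + x - 1 / 2 := by linarith
  have m1 := mul_le_mul_of_nonneg_left l1 hk.le
  have m2 := mul_le_mul_of_nonneg_left l2 hk.le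
  have m3 := mul_le_mul_of_nonneg_left l3 hx.le
  have e1 : ((n : ℝ) + x - 1 / 2) * (x / (n + x)) = x - x / (2 * (n + x)) := by
    field_simp
  have e2 : ((n : ℝ) + x - 1 / 2) * (x / n) = x + x * (x - 1 / 2) / n := by
    field_simp
    ring
  have b1 : x / (2 * (n + x)) ≤ 1 / (n - 1) := by
    rw [div_le_div_iff₀ (by linarith) hm0]
    nlinarith
  have b2 : x * (x - 1 / 2) / n ≤ 1 / (n - 1) := by
    rw [div_le_div_iff₀ hn0 hm0]
    have hq : x * (x - 1 / 2) ≤ 1 := by nlinarith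
    have := mul_le_mul_of_nonneg_right hq hm0.le
    linarith
  have b3 : x * (1 / ((n : ℝ) - 1)) ≤ 1 / (n - 1) :=
    mul_le_of_le_one_left (by positivity) hx1
  have b4 : 2 / ((n : ℝ) - 1) = 1 / (n - 1) + 1 / (n - 1) := by ring
  have b5 : 0 < 1 / ((n : ℝ) - 1) := by positivity
  rw [b4, abs_le]
  unfold stirErr
  constructor <;> linarith

lemma stirErr_tendsto : Tendsto stirErr atTop (nhds 0) := by
  have hN : Tendsto (fun y : ℝ => ⌈y - 1⌉₊) atTop atTop :=
    tendsto_nat_ceil_atTop.comp (tendsto_atTop_add_const_right _ (-1) tendsto_id)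
  have h1 := stirErr_nat.comp hN
  have h2 : Tendsto (fun n : ℕ => 2 / ((n : ℝ) - 1)) atTop (nhds 0) :=
    tendsto_const_nhds.div_atTop
      (tendsto_atTop_add_const_right _ (-1) tendsto_natCast_atTop_atTop)
  have h3 : Tendsto (fun y : ℝ => stirErr y - stirErr (⌈y - 1⌉₊ : ℕ)) atTop (nhds 0) := by
    refine squeeze_zero_norm' ?_ (h2.comp hN)
    filter_upwards [hN.eventually_ge_atTop 2, eventually_ge_atTop 1] with y hy hy1
    have hc1 := Nat.le_ceil (y - 1)
    have hc2 := Nat.ceil_lt_add_one (show 0 ≤ y - 1 by linarith)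
    have := stirErr_diff ⌈y - 1⌉₊ hy (y - ⌈y - 1⌉₊) (by linarith) (by linarith)
    rwa [add_sub_cancel] at this
  have := h3.add h1
  simpa using this

lemma KL_eq (y : ℝ) (hy : 0 < y) :
    KL (fNormal (Real.log y) y⁻¹) (fLogGamma y 1) =
      stirErr y + (y * exp (1 / (2 * y)) - y - 1 / 2) := by
  have hyi : 0 < y⁻¹ := inv_pos.2 hy
  set v : NNReal := ⟨y⁻¹, hyi.le⟩ with hv
  have hvc : (v : ℝ) = y⁻¹ := rfl
  have hv0 : v ≠ 0 := by
    intro h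
    rw [h] at hvc
    simp at hvc
    linarith
  set P := ProbabilityTheory.gaussianReal (log y) v with hP
  have hpt : ∀ ξ, log (fNormal (log y) y⁻¹ ξ / fLogGamma y 1 ξ) =
      (log (Gamma y) - log (2 * π * y⁻¹) / 2) - y / 2 * (ξ - log y) ^ 2 - y * ξ + exp ξ := by
    intro ξ
    have hG := Gamma_pos_of_pos hy
    unfold fNormal fLogGamma
    have hs : 0 < √(2 * π * y⁻¹) := by positivity
    rw [log_div (by positivity) (by simp [hG.ne', exp_ne_zero]),
      log_mul (by positivity) (exp_pos _).ne', one_rpow, mul_one,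
      log_mul (by positivity) (exp_pos _).ne', log_exp, log_exp, log_inv, log_inv,
      log_sqrt (by positivity)]
    field_simp
    ring
  have h1 : KL (fNormal (Real.log y) y⁻¹) (fLogGamma y 1) =
      ∫ ξ, ((log (Gamma y) - log (2 * π * y⁻¹) / 2) - y / 2 * (ξ - log y) ^ 2 - y * ξ + exp ξ)
        ∂P := by
    rw [hP, ProbabilityTheory.integral_gaussianReal_eq_integral_smul hv0]
    unfold KL
    refine integral_congr_ae (Eventually.of_forall fun ξ => ?_)
    simp only [hpt, smul_eq_mul]
    rfl
  have hid : Integrable (fun ξ : ℝ => ξ) P :=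
    (ProbabilityTheory.memLp_id_gaussianReal' (μ := log y) (v := v) 1 (by simp)).integrable le_rfl
  have hexp : Integrable (fun ξ : ℝ => exp ξ) P := by
    simpa using ProbabilityTheory.integrable_exp_mul_gaussianReal (μ := log y) (v := v) 1
  have hsq : Integrable (fun ξ : ℝ => (ξ - log y) ^ 2) P :=
    ((ProbabilityTheory.memLp_id_gaussianReal' (μ := log y) (v := v) 2 (by simp)).sub
      (memLp_const (log y))).integrable_sq
  have i1 : ∫ ξ, ξ ∂P = log y := ProbabilityTheory.integral_id_gaussianReal
  have i2 : ∫ ξ, (ξ - log y) ^ 2 ∂P = y⁻¹ := by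
    have := ProbabilityTheory.variance_fun_id_gaussianReal (μ := log y) (v := v)
    rw [ProbabilityTheory.variance_eq_integral (by fun_prop)] at this
    rw [← hP, i1] at this
    exact this
  have i3 : ∫ ξ, exp ξ ∂P = y * exp (1 / (2 * y)) := by
    have := ProbabilityTheory.mgf_gaussianReal (p := P) (X := id) (μ := log y) (v := v)
      (by rw [Measure.map_id]) 1
    simp only [ProbabilityTheory.mgf, one_mul, id, mul_one] at this
    rw [this, exp_add, exp_log hy, hvc]
    congr 2
    field_simp
  have hc : Integrable (fun _ : ℝ => log (Gamma y) - log (2 * π * y⁻¹) / 2) P :=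
    integrable_const _
  have hsq2 : Integrable (fun ξ : ℝ => y / 2 * (ξ - log y) ^ 2) P := hsq.const_mul _
  have hid2 : Integrable (fun ξ : ℝ => y * ξ) P := hid.const_mul _
  rw [h1, integral_add (by exact (hc.sub hsq2).sub hid2) hexp,
    integral_sub (by exact hc.sub hsq2) hid2,
    integral_sub hc hsq2, integral_const_mul, integral_const_mul,
    i1, i2, i3, integral_const, log_mul (by positivity) hyi.ne', log_inv, stirErr]
  simp
  field_simp
  ring

lemma exp_term : Tendsto (fun y : ℝ => y * exp (1 / (2 * y)) - y - 1 / 2) atTop (nhds 0) := by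
  have h2 : Tendsto (fun y : ℝ => 1 / y) atTop (nhds 0) := by
    simpa using tendsto_inv_atTop_zero (𝕜 := ℝ)
  refine squeeze_zero_norm' ?_ h2
  filter_upwards [eventually_ge_atTop 1] with y hy
  have hy0 : 0 < y := by linarith
  have hle : |1 / (2 * y)| ≤ 1 := by
    rw [abs_of_pos (by positivity), div_le_one (by positivity)]
    linarith
  have h := abs_exp_sub_one_sub_id_le hle
  have e : y * exp (1 / (2 * y)) - y - 1 / 2 = y * (exp (1 / (2 * y)) - 1 - 1 / (2 * y)) := by
    field_simp
  rw [e, norm_eq_abs, abs_mul, abs_of_pos hy0]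
  refine (mul_le_mul_of_nonneg_left h hy0.le).trans ?_
  have : y * (1 / (2 * y)) ^ 2 = 1 / y / 4 := by
    field_simp
    norm_num
  rw [this]
  have : 0 < 1 / y := by positivity
  linarith

theorem kl_normal_logGamma_tendsto_zero :
    Tendsto (fun y : ℝ => KL (fNormal (Real.log y) y⁻¹) (fLogGamma y 1))
      atTop (nhds 0) := by
  have h := stirErr_tendsto.add exp_term
  rw [add_zero] at h
  refine h.congr' ?_
  filter_upwards [eventually_gt_atTop 0] with y hy
  exact (KL_eq y hy).symm
end

section
/- Define G(y) = log Γ(y) + (1/2)·log(y/(2π)) − y·log y + y·e^(1/(2y)) − 1/2 for y > 0, where Γ is the real Gamma function. Then G(y) = 5/(24y) + O(y⁻²) as y → ∞; precisely, there exist constants C > 0 and Y₀ > 0 such that for all real y ≥ Y₀, |G(y) − 5/(24y)| ≤ C/y². -/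
open Real

/-- Closed-form expression for the KL divergence between the `N(log y, 1/y)` density
and the log-Gamma density with parameters `y` and `1`. -/
noncomputable def G (y : ℝ) : ℝ :=
  Real.log (Real.Gamma y) + (1 / 2) * Real.log (y / (2 * Real.pi)) - y * Real.log y +
    y * Real.exp (1 / (2 * y)) - 1 / 2

open Filter Topology

/-- Remainder in Stirling's formula. -/
noncomputable def stirS (y : ℝ) : ℝ :=
  Real.log (Real.Gamma y) - (y - 1 / 2) * Real.log y + y - 1 / 2 * Real.log (2 * Real.pi)

theorem log_lower {y : ℝ} (hy : 0 < y) :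
    1 + 1 / (3 * (2 * y + 1) ^ 2) ≤ (y + 1 / 2) * Real.log (1 + y⁻¹) := by
  have h := Real.hasSum_log_one_add_inv hy
  have h2 := sum_le_hasSum (Finset.range 2) (fun k _ => by positivity) h
  simp only [Finset.sum_range_succ, Finset.sum_range_zero] at h2
  have h3 := mul_le_mul_of_nonneg_left h2 (show 0 ≤ y + 1 / 2 by positivity)
  refine le_trans (le_of_eq ?_) h3
  push_cast
  field_simp
  ring

theorem log_upper {y : ℝ} (hy : 0 < y) :
    (y + 1 / 2) * Real.log (1 + y⁻¹) ≤ 1 + 1 / (12 * y * (y + 1)) := by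
  have h := Real.hasSum_log_one_add_inv hy
  have ht0 : 0 < 1 / (2 * y + 1) := by positivity
  have ht1 : 1 / (2 * y + 1) < 1 := by
    rw [div_lt_one (by positivity)]; linarith
  set t := 1 / (2 * y + 1) with ht
  have ht2 : t ^ 2 < 1 := by nlinarith
  have hg := (hasSum_geometric_of_lt_one (sq_nonneg t) ht2).mul_left (2 * t / 3)
  have hi := hasSum_ite_eq (0 : ℕ) (4 * t / 3)
  have hle := hasSum_le (fun k => ?_) h (hg.add hi)
  · have h3 := mul_le_mul_of_nonneg_left hle (show 0 ≤ y + 1 / 2 by positivity)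
    refine le_trans h3 (le_of_eq ?_)
    have : 1 - t ^ 2 = 4 * y * (y + 1) / (2 * y + 1) ^ 2 := by
      rw [ht]; field_simp; ring
    rw [this, ht]
    field_simp
    ring
  · rcases k with _ | k
    · simp; linarith
    · simp only [Nat.add_eq_zero_iff, one_ne_zero, and_false, if_false, add_zero]
      have e : t ^ (2 * (k + 1) + 1) = t * (t ^ 2) ^ (k + 1) := by rw [← pow_mul]; ring
      rw [e]
      have hk : 1 / (2 * ((k + 1 : ℕ) : ℝ) + 1) ≤ 1 / 3 := by
        apply one_div_le_one_div_of_le (by norm_num)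
        push_cast
        have : (0 : ℝ) ≤ k := k.cast_nonneg
        linarith
      have hp : 0 ≤ t * (t ^ 2) ^ (k + 1) := by positivity
      nlinarith [mul_le_mul_of_nonneg_right hk hp]

theorem logGamma_add_one {y : ℝ} (hy : 0 < y) :
    Real.log (Real.Gamma (y + 1)) = Real.log (Real.Gamma y) + Real.log y := by
  rw [Real.Gamma_add_one hy.ne', Real.log_mul hy.ne' (Real.Gamma_pos_of_pos hy).ne', add_comm]

theorem stirS_diff {y : ℝ} (hy : 0 < y) :
    stirS y - stirS (y + 1) = (y + 1 / 2) * Real.log (1 + y⁻¹) - 1 := by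
  have e : 1 + y⁻¹ = (y + 1) / y := by field_simp
  rw [e, Real.log_div (by positivity) hy.ne']
  unfold stirS
  rw [logGamma_add_one hy]
  ring

theorem stirS_tendsto {x : ℝ} (hx : 0 < x) :
    Tendsto (fun n : ℕ => stirS (x + n)) atTop (𝓝 0) := by
  rw [← tendsto_add_atTop_iff_nat 1]
  have h1 := (Real.BohrMollerup.tendsto_log_gamma hx).const_sub (Real.log (Real.Gamma x))
  have h2 := (Stirling.tendsto_stirlingSeq_sqrt_pi.log (by positivity)).sub_const
    (Real.log (√π))
  have h3 := (Real.tendsto_mul_log_one_add_div_atTop (x + 1)).comp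
    (tendsto_natCast_atTop_atTop (R := ℝ))
  have h4 : Tendsto (fun n : ℕ => Real.log (1 + (x + 1) / (n : ℝ))) atTop (𝓝 (Real.log (1 + 0))) := by
    apply Tendsto.log _ (by norm_num)
    exact (tendsto_const_div_atTop_nhds_zero_nat (x + 1)).const_add 1
  have h5 := (((h1.add h2).add (h3.const_sub (x + 1))).sub (h4.const_mul (x + 1 / 2)))
  simp only [sub_self, add_zero, Real.log_one, mul_zero] at h5
  refine h5.congr' ?_
  filter_upwards [eventually_gt_atTop 0] with n hn
  have hn' : (0 : ℝ) < n := by exact_mod_cast hn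
  have hG := Real.BohrMollerup.f_add_nat_eq (f := fun y => Real.log (Real.Gamma y))
    (fun {y} hy => logGamma_add_one hy) hx (n + 1)
  simp only [Function.comp, Real.BohrMollerup.logGammaSeq, Stirling.log_stirlingSeq_formula]
  unfold stirS
  rw [hG]
  have e : 1 + (x + 1) / (n : ℝ) = (x + (n + 1 : ℕ)) / n := by push_cast; field_simp; ring
  rw [e, Real.log_div (by positivity) hn'.ne', Real.log_div hn'.ne' (Real.exp_pos 1).ne',
    Real.log_exp, Real.log_mul two_ne_zero hn'.ne', Real.log_mul two_ne_zero Real.pi_pos.ne',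
    Real.log_sqrt Real.pi_pos.le]
  push_cast
  ring

theorem aux_tendsto (x c : ℝ) (k : ℕ) (hk : k ≠ 0) :
    Tendsto (fun n : ℕ => c / (x + n) ^ k) atTop (𝓝 0) := by
  apply Tendsto.const_div_atTop
  exact (tendsto_pow_atTop hk).comp
    (tendsto_atTop_add_const_left _ _ tendsto_natCast_atTop_atTop)

theorem stirS_upper {x : ℝ} (hx : 0 < x) : stirS x ≤ 1 / 12 / x := by
  have hm : Monotone (fun n : ℕ => stirS (x + n) - 1 / 12 / (x + n) ^ 1) := by
    apply monotone_nat_of_le_succ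
    intro n
    have hy : 0 < x + n := by positivity
    have e : x + ((n + 1 : ℕ) : ℝ) = (x + n) + 1 := by push_cast; ring
    rw [e]
    generalize x + (n : ℝ) = y at *
    have a := stirS_diff hy
    have b := log_upper hy
    have c : 1 / (12 * y * (y + 1)) = 1 / 12 / y - 1 / 12 / (y + 1) := by field_simp; ring
    simp only [pow_one]
    linarith
  have ht := (stirS_tendsto hx).sub (aux_tendsto x (1 / 12) 1 one_ne_zero)
  have := hm.ge_of_tendsto ht 0
  simp at this ⊢
  linarith

theorem stirS_lower {x : ℝ} (hx : 0 < x) : 1 / 12 / x - 1 / x ^ 2 ≤ stirS x := by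
  have hm : Antitone (fun n : ℕ => stirS (x + n) - 1 / 12 / (x + n) ^ 1 + 1 / (x + n) ^ 2) := by
    apply antitone_nat_of_succ_le
    intro n
    have hy : 0 < x + n := by positivity
    have e : x + ((n + 1 : ℕ) : ℝ) = (x + n) + 1 := by push_cast; ring
    rw [e]
    generalize x + (n : ℝ) = y at *
    have a := stirS_diff hy
    have b := log_lower hy
    have c : 1 / 12 / y - 1 / 12 / (y + 1) - (1 / y ^ 2 - 1 / (y + 1) ^ 2)
        ≤ 1 / (3 * (2 * y + 1) ^ 2) := by
      rw [← sub_nonneg]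
      have : 1 / (3 * (2 * y + 1) ^ 2) - (1 / 12 / y - 1 / 12 / (y + 1) - (1 / y ^ 2 - 1 / (y + 1) ^ 2))
        = (12 * (2 * y + 1) ^ 3 - y * (y + 1)) / (12 * (2 * y + 1) ^ 2 * y ^ 2 * (y + 1) ^ 2) := by
        field_simp
        ring
      rw [this]
      apply div_nonneg _ (by positivity)
      nlinarith [pow_pos hy 3, pow_pos hy 2]
    simp only [pow_one]
    linarith
  have ht := ((stirS_tendsto hx).sub (aux_tendsto x (1 / 12) 1 one_ne_zero)).add
    (aux_tendsto x 1 2 two_ne_zero)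
  have := hm.le_of_tendsto ht 0
  simp at this ⊢
  linarith

theorem G_asymptotic :
    ∃ C > (0 : ℝ), ∃ Y₀ > (0 : ℝ), ∀ y : ℝ, Y₀ ≤ y →
      |G y - 5 / (24 * y)| ≤ C / y ^ 2 := by
  refine ⟨2, by norm_num, 1, by norm_num, fun y hy1 => ?_⟩
  have hy : 0 < y := by linarith
  have hu := stirS_upper hy
  have hl := stirS_lower hy
  have hx0 : 0 < 1 / (2 * y) := by positivity
  have hx1 : |1 / (2 * y)| ≤ 1 := by
    rw [abs_of_pos hx0, div_le_one (by positivity)]; linarith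
  have hb := Real.exp_bound hx1 (n := 3) (by norm_num)
  simp only [Finset.sum_range_succ, Finset.sum_range_zero] at hb
  rw [abs_of_pos hx0] at hb
  norm_num [Nat.factorial] at hb
  have hG : G y = stirS y + y * Real.exp (1 / (2 * y)) - y - 1 / 2 := by
    unfold G stirS
    rw [Real.log_div hy.ne' (by positivity)]
    ring
  have hE : |y * Real.exp (1 / (2 * y)) - y - 1 / 2 - 1 / 8 / y| ≤ 1 / y ^ 2 := by
    have e : y * Real.exp (1 / (2 * y)) - y - 1 / 2 - 1 / 8 / y
      = y * (Real.exp (1 / (2 * y)) - (1 + 1 / (2 * y) + (1 / (2 * y)) ^ 2 / 2)) := by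
      field_simp
      ring
    rw [e, abs_mul, abs_of_pos hy]
    have hb' : |Real.exp (1 / (2 * y)) - (1 + 1 / (2 * y) + (1 / (2 * y)) ^ 2 / 2)|
        ≤ (1 / (2 * y)) ^ 3 * (2 / 9) := by
      convert hb using 2
      · congr 2 <;> field_simp
      · field_simp
    refine (mul_le_mul_of_nonneg_left hb' hy.le).trans ?_
    have : y * ((1 / (2 * y)) ^ 3 * (2 / 9)) = 1 / 36 * (1 / y ^ 2) := by field_simp; norm_num
    rw [this]
    have : 0 < 1 / y ^ 2 := by positivity
    linarith
  have e5 : 5 / (24 * y) = 1 / 12 / y + 1 / 8 / y := by field_simp; norm_num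
  have e2 : 2 / y ^ 2 = 1 / y ^ 2 + 1 / y ^ 2 := by ring
  have hp : 0 < 1 / y ^ 2 := by positivity
  rw [hG, e5, e2]
  rw [abs_le] at hE ⊢
  constructor <;> linarith [hE.1, hE.2]
end
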